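/- Let N and m be positive integers, let B > 0 and σ_w > 0, and set c = σ_w²/2 and b = B/(2m). Define the shifted Gamma density f : [c, ∞) → ℝ by f(y) = (y−c)^{m−1} exp(−(y−c)/b)/(b^m (m−1)!). Then for every γ₀ > 0, 1 − ∫_c^∞ [γ(N, N γ₀/(2y))/(N−1)!] f(y) dy = (2 m^m/(B^m (m−1)!)) · e^{m σ_w²/B} · Σ_{k=0}^{m−1} Σ_{n=0}^{N−1} C(m−1, k) (2^{k−n}/n!) (−σ_w²)^{m−1−k} (N γ₀)^n (B/(2m))^{k−n+1} Γ(k−n+1, m σ_w²/B; m N γ₀/B), where γ(s, t) = ∫₀^t u^{s−1} e^{−u} du is the lower incomplete Gamma function, C(m−1, k) is the binomial coefficient, and Γ(s, x; B') := ∫_x^∞ t^{s−1} exp(−t − B'/t) dt is the extended incomplete Gamma function. -/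

import Mathlib

open MeasureTheory

/-- The extended incomplete Gamma function
`Γ(s, x; B') = ∫ₓ^∞ t ^ (s - 1) exp (-t - B'/t) dt`. -/
noncomputable def extGamma (s x B' : ℝ) : ℝ :=
  ∫ t in Set.Ioi x, t ^ (s - 1) * Real.exp (-t - B' / t)

/-- The lower incomplete Gamma function at a positive integer shape,
`γ(N, t) = ∫₀ᵗ u ^ (N - 1) exp (-u) du`. -/
noncomputable def lowGamma (N : ℕ) (t : ℝ) : ℝ :=
  ∫ u in (0:ℝ)..t, u ^ (N - 1) * Real.exp (-u)

/-!
For an integer shape `N`, the regularized lower incomplete Gamma function `γ(N, t) / (N-1)!` is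
`1 - exp (-t) ∑_{n < N} tⁿ / n!`. As `f` has total mass one, the detection probability is
therefore `∫_c^∞ exp (-a/y) ∑_{n < N} (a/y)ⁿ / n! · f y dy` with `a = N γ₀ / 2`.
Expanding `(y - c)^(m-1)` binomially leaves a finite combination of the integrals
`∫_c^∞ y^(k-n) exp (-y/b - a/y) dy`, which the substitution `y = b t` turns into extended
incomplete Gamma functions.
-/

open Set Filter Asymptotics

section RegularizedGamma

/-- The regularized upper incomplete Gamma function `Γ(N, t) / Γ(N)` at an integer shape `N`,
encoded by its closed form, the probability that a Poisson variable of mean `t` is below `N`. -/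
noncomputable def regUpperGamma (N : ℕ) (t : ℝ) : ℝ :=
  Real.exp (-t) * ∑ n ∈ Finset.range N, t ^ n / (Nat.factorial n : ℝ)

lemma regUpperGamma_succ (N : ℕ) (t : ℝ) :
    regUpperGamma (N + 1) t
      = regUpperGamma N t + Real.exp (-t) * (t ^ N / (Nat.factorial N : ℝ)) := by
  rw [regUpperGamma, Finset.sum_range_succ, mul_add, regUpperGamma]

lemma regUpperGamma_succ_zero (N : ℕ) : regUpperGamma (N + 1) 0 = 1 := by
  simp [regUpperGamma, Finset.sum_range_succ']

lemma hasDerivAt_regUpperGamma_succ (N : ℕ) (t : ℝ) :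
    HasDerivAt (regUpperGamma (N + 1)) (-(t ^ N * Real.exp (-t) / (Nat.factorial N : ℝ))) t := by
  have hexp : HasDerivAt (fun u : ℝ => Real.exp (-u)) (-Real.exp (-t)) t := by
    simpa using (hasDerivAt_neg t).exp
  induction N with
  | zero => simpa [funext (regUpperGamma_succ 0), regUpperGamma] using hexp
  | succ N ih =>
    have hterm := hexp.mul ((hasDerivAt_pow (N + 1) t).div_const (Nat.factorial (N + 1) : ℝ))
    rw [funext (regUpperGamma_succ (N + 1))]
    refine (ih.add hterm).congr_deriv ?_
    rw [Nat.factorial_succ, Nat.add_sub_cancel]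
    push_cast
    field_simp
    ring

lemma lowGamma_div_factorial {N : ℕ} (hN : 0 < N) (t : ℝ) :
    lowGamma N t / (Nat.factorial (N - 1) : ℝ) = 1 - regUpperGamma N t := by
  obtain ⟨M, rfl⟩ := Nat.exists_eq_add_one.2 hN
  have hFTC := intervalIntegral.integral_eq_sub_of_hasDerivAt (a := 0) (b := t)
    (fun u _ => (hasDerivAt_regUpperGamma_succ M u).neg)
    (Continuous.intervalIntegrable (by fun_prop) _ _)
  simp only [neg_neg, intervalIntegral.integral_div, Pi.neg_apply, regUpperGamma_succ_zero] at hFTC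
  rw [lowGamma, Nat.add_sub_cancel, hFTC, neg_sub_neg]

end RegularizedGamma

section ShiftedErlang

lemma integral_comp_sub_right_Ioi {E : Type*} [NormedAddCommGroup E] [NormedSpace ℝ E]
    (g : ℝ → E) (a c : ℝ) : ∫ y in Ioi a, g (y - c) = ∫ x in Ioi (a - c), g x := by
  have h := (measurePreserving_sub_right (volume : Measure ℝ) c).setIntegral_preimage_emb
    (MeasurableEquiv.subRight c).measurableEmbedding g (Ioi (a - c))
  rwa [preimage_sub_const_Ioi, sub_add_cancel] at h

/-- The density on `[c, ∞)` of `c + X`, where `X` is Gamma distributed with integer shape `m` and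
scale `b`; only its values on `[c, ∞)` are meaningful. -/
noncomputable def shiftedErlangPDF (m : ℕ) (b c y : ℝ) : ℝ :=
  (y - c) ^ (m - 1) * Real.exp (-(y - c) / b) / (b ^ m * (Nat.factorial (m - 1) : ℝ))

variable {m : ℕ} {b : ℝ}

lemma integral_shiftedErlangPDF (hm : 0 < m) (hb : 0 < b) (c : ℝ) :
    ∫ y in Ioi c, shiftedErlangPDF m b c y = 1 := by
  have hGamma : ∫ x in Ioi (0 : ℝ), x ^ (m - 1) * Real.exp (-x / b)
      = b ^ m * (Nat.factorial (m - 1) : ℝ) := by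
    obtain ⟨M, rfl⟩ := Nat.exists_eq_add_one.2 hm
    have h := Real.integral_rpow_mul_exp_neg_mul_Ioi (a := M + 1) (by positivity) (inv_pos.2 hb)
    rw [Real.Gamma_nat_eq_factorial, one_div, inv_inv] at h
    simpa [div_eq_inv_mul, ← Real.rpow_natCast] using h
  have hne : b ^ m * (Nat.factorial (m - 1) : ℝ) ≠ 0 := by positivity
  simp only [shiftedErlangPDF]
  rw [integral_comp_sub_right_Ioi (fun x => x ^ (m - 1) * Real.exp (-x / b)
    / (b ^ m * (Nat.factorial (m - 1) : ℝ))), sub_self, integral_div, hGamma, div_self hne]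

lemma integrableOn_shiftedErlangPDF (hm : 0 < m) (hb : 0 < b) (c : ℝ) :
    IntegrableOn (shiftedErlangPDF m b c) (Ioi c) :=
  .of_integral_ne_zero (integral_shiftedErlangPDF hm hb c ▸ one_ne_zero)

lemma shiftedErlangPDF_eq_sum (hm : 0 < m) (b c y : ℝ) :
    shiftedErlangPDF m b c y = Real.exp (c / b) / (b ^ m * (Nat.factorial (m - 1) : ℝ))
      * ∑ k ∈ Finset.range m,
          ((m - 1).choose k : ℝ) * (-c) ^ (m - 1 - k) * (y ^ k * Real.exp (-y / b)) := by
  have hbinom : (y - c) ^ (m - 1)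
      = ∑ k ∈ Finset.range m, y ^ k * (-c) ^ (m - 1 - k) * ((m - 1).choose k : ℝ) := by
    rw [sub_eq_add_neg, add_pow, Nat.sub_add_cancel hm]
  have hexp : Real.exp (-(y - c) / b) = Real.exp (c / b) * Real.exp (-y / b) := by
    rw [← Real.exp_add]
    ring_nf
  rw [shiftedErlangPDF, hbinom, hexp, Finset.sum_mul, Finset.sum_div, Finset.mul_sum]
  exact Finset.sum_congr rfl fun k _ => by ring

end ShiftedErlang

section ExtendedGamma

variable {b c : ℝ}

lemma integrableOn_rpow_mul_exp_neg_div_sub_div (hb : 0 < b) (hc : 0 < c) (s a : ℝ) :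
    IntegrableOn (fun y : ℝ => y ^ s * Real.exp (-y / b - a / y)) (Ioi c) := by
  refine integrable_of_isBigO_exp_neg (b := 1 / (2 * b)) (by positivity) ?_ ?_
  · intro y hy
    have hy0 : y ≠ 0 := (hc.trans_le hy).ne'
    refine ((Real.continuousAt_rpow_const _ _ (.inl hy0)).mul ?_).continuousWithinAt
    fun_prop (disch := assumption)
  · have hpow : (fun y : ℝ => y ^ s) =O[atTop] fun y => Real.exp (1 / (2 * b) * y) :=
      (isLittleO_rpow_exp_pos_mul_atTop s (by positivity)).isBigO
    have hexp : (fun y : ℝ => Real.exp (-(a / y))) =O[atTop] fun _ => (1 : ℝ) :=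
      ((Real.continuous_exp.tendsto _).comp (tendsto_id.const_div_atTop a).neg).isBigO_one ℝ
    refine ((hpow.mul (isBigO_refl (fun y => Real.exp (-y / b)) atTop)).mul hexp).congr
      (fun y => ?_) (fun y => ?_)
    · rw [mul_assoc, ← Real.exp_add, sub_eq_add_neg]
    · rw [mul_one, ← Real.exp_add]
      congr 1
      field_simp
      ring

lemma integral_rpow_mul_exp_eq_extGamma (hb : 0 < b) (hc : 0 ≤ c) (s a : ℝ) :
    ∫ y in Ioi c, y ^ s * Real.exp (-y / b - a / y)
      = b ^ (s + 1) * extGamma (s + 1) (c / b) (a / b) := by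
  have hscale : ∀ t ∈ Ioi (c / b), (b * t) ^ s * Real.exp (-(b * t) / b - a / (b * t))
      = b ^ s * (t ^ (s + 1 - 1) * Real.exp (-t - a / b / t)) := by
    intro t ht
    have ht0 : 0 < t := (div_nonneg hc hb.le).trans_lt ht
    rw [Real.mul_rpow hb.le ht0.le, add_sub_cancel_right, mul_assoc, ← mul_neg,
      mul_div_cancel_left₀ _ hb.ne', div_div]
  calc ∫ y in Ioi c, y ^ s * Real.exp (-y / b - a / y)
      = b * ∫ t in Ioi (c / b), (b * t) ^ s * Real.exp (-(b * t) / b - a / (b * t)) := by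
        rw [← smul_eq_mul, integral_comp_mul_left_Ioi'
          (fun y => y ^ s * Real.exp (-y / b - a / y)) _ hb, mul_div_cancel₀ _ hb.ne']
    _ = b * (b ^ s * extGamma (s + 1) (c / b) (a / b)) := by
        rw [setIntegral_congr_fun measurableSet_Ioi hscale, integral_const_mul, extGamma]
    _ = b ^ (s + 1) * extGamma (s + 1) (c / b) (a / b) := by
        rw [Real.rpow_add_one hb.ne', mul_comm _ b, mul_assoc]

end ExtendedGamma

section DetectionIntegral

variable {m : ℕ}

lemma regUpperGamma_mul_shiftedErlangPDF (N : ℕ) (hm : 0 < m) (a b c : ℝ) {y : ℝ} (hy : 0 < y) :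
    regUpperGamma N (a / y) * shiftedErlangPDF m b c y
      = Real.exp (c / b) / (b ^ m * (Nat.factorial (m - 1) : ℝ))
        * ∑ k ∈ Finset.range m, ∑ n ∈ Finset.range N,
            ((m - 1).choose k : ℝ) * (-c) ^ (m - 1 - k) * (a ^ n / (Nat.factorial n : ℝ))
              * (y ^ ((k : ℝ) - n) * Real.exp (-y / b - a / y)) := by
  have hexp : Real.exp (-y / b - a / y) = Real.exp (-(a / y)) * Real.exp (-y / b) := by
    rw [← Real.exp_add, neg_add_eq_sub]
  rw [regUpperGamma, shiftedErlangPDF_eq_sum hm, mul_left_comm, mul_comm (Real.exp (-(a / y)) * _),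
    Finset.sum_mul]
  congr 1
  refine Finset.sum_congr rfl fun k _ => ?_
  rw [Finset.mul_sum, Finset.mul_sum]
  refine Finset.sum_congr rfl fun n _ => ?_
  rw [hexp, Real.rpow_sub hy, Real.rpow_natCast, Real.rpow_natCast, div_pow]
  ring

variable {b c : ℝ}

lemma integrableOn_regUpperGamma_mul_shiftedErlangPDF (N : ℕ) (hm : 0 < m) (hb : 0 < b)
    (hc : 0 < c) (a : ℝ) :
    IntegrableOn (fun y => regUpperGamma N (a / y) * shiftedErlangPDF m b c y) (Ioi c) := by
  refine IntegrableOn.congr_fun ?_ (fun y hy =>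
    (regUpperGamma_mul_shiftedErlangPDF N hm a b c (hc.trans hy)).symm) measurableSet_Ioi
  exact (integrable_finsetSum _ fun k _ => integrable_finsetSum _ fun n _ =>
    (integrableOn_rpow_mul_exp_neg_div_sub_div hb hc _ a).const_mul _).const_mul _

lemma integral_regUpperGamma_mul_shiftedErlangPDF (N : ℕ) (hm : 0 < m) (hb : 0 < b)
    (hc : 0 < c) (a : ℝ) :
    ∫ y in Ioi c, regUpperGamma N (a / y) * shiftedErlangPDF m b c y
      = Real.exp (c / b) / (b ^ m * (Nat.factorial (m - 1) : ℝ))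
        * ∑ k ∈ Finset.range m, ∑ n ∈ Finset.range N,
            ((m - 1).choose k : ℝ) * (-c) ^ (m - 1 - k) * (a ^ n / (Nat.factorial n : ℝ))
              * (b ^ ((k : ℤ) - n + 1) * extGamma ((k : ℝ) - n + 1) (c / b) (a / b)) := by
  have hint : ∀ (r : ℝ) (k n : ℕ), IntegrableOn
      (fun y : ℝ => r * (y ^ ((k : ℝ) - n) * Real.exp (-y / b - a / y))) (Ioi c) :=
    fun r _ _ => (integrableOn_rpow_mul_exp_neg_div_sub_div hb hc _ a).const_mul r
  rw [setIntegral_congr_fun measurableSet_Ioi fun y hy =>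
      regUpperGamma_mul_shiftedErlangPDF N hm a b c (hc.trans hy),
    integral_const_mul,
    integral_finsetSum _ fun k _ => integrable_finsetSum _ fun n _ => hint _ k n]
  congr 1
  refine Finset.sum_congr rfl fun k _ => ?_
  rw [integral_finsetSum _ fun n _ => hint _ k n]
  refine Finset.sum_congr rfl fun n _ => ?_
  rw [integral_const_mul, integral_rpow_mul_exp_eq_extGamma hb hc.le, ← Real.rpow_intCast]
  push_cast
  rfl

lemma one_sub_integral_lowGamma_mul_shiftedErlangPDF {N : ℕ} (hN : 0 < N) (hm : 0 < m)
    (hb : 0 < b) (hc : 0 < c) (a : ℝ) :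
    1 - ∫ y in Ioi c, lowGamma N (a / y) / (Nat.factorial (N - 1) : ℝ) * shiftedErlangPDF m b c y
      = ∫ y in Ioi c, regUpperGamma N (a / y) * shiftedErlangPDF m b c y := by
  simp only [lowGamma_div_factorial hN, sub_mul, one_mul]
  rw [integral_sub (integrableOn_shiftedErlangPDF hm hb c)
    (integrableOn_regUpperGamma_mul_shiftedErlangPDF N hm hb hc a),
    integral_shiftedErlangPDF hm hb, sub_sub_cancel]

end DetectionIntegral

-- The exponents of `r` add up to `1 - m + (k - n) + (m - 1 - k) + n = 0`.
lemma coeff_rescale {K : Type*} [Field K] {r q : K} (hr : r ≠ 0) (hq : q ≠ 0)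
    {k m : ℕ} (hk : k < m) (n : ℕ) (b u v : K) :
    r * q ^ m / (r * q * b) ^ m * (r ^ ((k : ℤ) - n) * (r * u) ^ (m - 1 - k) * (r * v) ^ n)
      = u ^ (m - 1 - k) * v ^ n / b ^ m := by
  obtain ⟨j, rfl⟩ := Nat.exists_eq_add_of_lt hk
  rw [show k + j + 1 - 1 - k = j by omega, zpow_sub₀ hr, zpow_natCast, zpow_natCast]
  simp only [mul_pow]
  field_simp
  ring

/-- Special Case 2 (single active primary user) of the paper's Theorem 1: with
`c = σ_w² / 2`, `b = B / (2 m)` and the shifted Gamma density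
`f y = (y - c)^(m-1) exp (-(y - c)/b) / (bᵐ (m-1)!)` on `[c, ∞)`, the detection
probability `1 - ∫_c^∞ γ(N, N γ₀ / (2 y)) / (N-1)! · f y dy` equals the stated
closed form in terms of the extended incomplete Gamma function. -/
theorem detection_probability_single_PU (N m : ℕ) (hN : 0 < N) (hm : 0 < m)
    (B σw : ℝ) (hB : 0 < B) (hσw : 0 < σw)
    (c b : ℝ) (hc : c = σw ^ 2 / 2) (hb : b = B / (2 * m))
    (f : ℝ → ℝ)
    (hf : ∀ y, f y = (y - c) ^ (m - 1) * Real.exp (-(y - c) / b)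
        / (b ^ m * (Nat.factorial (m - 1) : ℝ))) :
    ∀ γ₀ : ℝ, 0 < γ₀ →
      1 - (∫ y in Set.Ioi c, (lowGamma N ((N : ℝ) * γ₀ / (2 * y))
            / (Nat.factorial (N - 1) : ℝ)) * f y)
        = (2 * (m : ℝ) ^ m / (B ^ m * (Nat.factorial (m - 1) : ℝ)))
            * Real.exp ((m : ℝ) * σw ^ 2 / B)
            * ∑ k ∈ Finset.range m, ∑ n ∈ Finset.range N,
                ((m - 1).choose k : ℝ)
                  * ((2 : ℝ) ^ ((k : ℤ) - n) / (Nat.factorial n : ℝ))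
                  * (-σw ^ 2) ^ (m - 1 - k) * ((N : ℝ) * γ₀) ^ n
                  * (B / (2 * m)) ^ ((k : ℤ) - n + 1)
                  * extGamma ((k : ℝ) - n + 1) ((m : ℝ) * σw ^ 2 / B)
                      ((m : ℝ) * N * γ₀ / B) := by
  intro γ₀ _
  have hb0 : 0 < b := by rw [hb]; positivity
  have hc0 : 0 < c := by rw [hc]; positivity
  have hB2 : B = 2 * m * b := by rw [hb]; field_simp
  have hσ2 : -σw ^ 2 = 2 * -c := by rw [hc]; ring
  have hshift : (m : ℝ) * σw ^ 2 / B = c / b := by rw [hb, hc]; field_simp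
  have hthreshold : (m : ℝ) * N * γ₀ / B = N * γ₀ / 2 / b := by rw [hb]; field_simp
  obtain rfl : f = shiftedErlangPDF m b c := funext hf
  simp only [← div_div (N * γ₀)]
  rw [one_sub_integral_lowGamma_mul_shiftedErlangPDF hN hm hb0 hc0,
    integral_regUpperGamma_mul_shiftedErlangPDF N hm hb0 hc0, hshift, hthreshold, ← hb]
  simp only [Finset.mul_sum]
  refine Finset.sum_congr rfl fun k hk => Finset.sum_congr rfl fun n _ => ?_
  have hcoeff := coeff_rescale (two_ne_zero' ℝ) (Nat.cast_ne_zero.2 hm.ne')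
    (Finset.mem_range.1 hk) n b (-c) (N * γ₀ / 2)
  rw [← hB2, ← hσ2, mul_div_cancel₀ _ two_ne_zero] at hcoeff
  linear_combination -(Real.exp (c / b) * ((m - 1).choose k : ℝ)
    / ((Nat.factorial (m - 1) : ℝ) * (Nat.factorial n : ℝ)) * b ^ ((k : ℤ) - n + 1)
    * extGamma ((k : ℝ) - n + 1) (c / b) (N * γ₀ / 2 / b)) * hcoeff
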